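/- For every a ≥ 1 and every smooth function u compactly supported in the rectangle R_a = (0,a)×(0,1/a), one has ∫_{R_a} (u_xx)² + (u_yy)² dx dy ≥ ω₁⁴(a⁴ + a⁻⁴) ∫_{R_a} u² dx dy; that is, the first eigenvalue of the strongly elliptic operator ∂⁴/∂x⁴ + ∂⁴/∂y⁴ on R_a with Dirichlet (clamped) boundary conditions equals ω₁⁴(a⁴ + a⁻⁴), obtained by separation of variables. -/

import Mathlib

open MeasureTheory Real Filter

noncomputable section

/-- Directional (partial) derivative of `u : ℝ × ℝ → ℝ` in direction `v`. -/
def pd (v : ℝ × ℝ) (u : ℝ × ℝ → ℝ) : ℝ × ℝ → ℝ := fun p => fderiv ℝ u p v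

/-- Second partial derivative `∂²u/∂x²`. -/
def uxx (u : ℝ × ℝ → ℝ) : ℝ × ℝ → ℝ := pd (1, 0) (pd (1, 0) u)

/-- Second partial derivative `∂²u/∂y²`. -/
def uyy (u : ℝ × ℝ → ℝ) : ℝ × ℝ → ℝ := pd (0, 1) (pd (0, 1) u)

/-- Mixed second partial derivative `∂²u/∂x∂y`. -/
def uxy (u : ℝ × ℝ → ℝ) : ℝ × ℝ → ℝ := pd (0, 1) (pd (1, 0) u)

/-- The Laplacian `Δu = u_xx + u_yy`. -/
def lap (u : ℝ × ℝ → ℝ) : ℝ × ℝ → ℝ := fun p => uxx u p + uyy u p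

/-- The open rectangle `R_a = (0,a) × (0,1/a)` of unit area. -/
def Rect (a : ℝ) : Set (ℝ × ℝ) := Set.Ioo 0 a ×ˢ Set.Ioo 0 (1 / a)

/-- Admissible test functions: smooth, compactly supported inside `Ω`. -/
def Adm (Ω : Set (ℝ × ℝ)) (u : ℝ × ℝ → ℝ) : Prop :=
  ContDiff ℝ (⊤ : ℕ∞) u ∧ HasCompactSupport u ∧ tsupport u ⊆ Ω

/-- First Dirichlet eigenvalue of the biharmonic operator on `R_a`,
characterized variationally as the infimum of the Rayleigh quotient. -/
def lam1 (a : ℝ) : ℝ :=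
  sInf { μ | ∃ u : ℝ × ℝ → ℝ, Adm (Rect a) u ∧ u ≠ 0 ∧
    μ = (∫ p, (lap u p) ^ 2) / (∫ p, (u p) ^ 2) }

theorem HasCompactSupport.sq {X : Type*} [TopologicalSpace X] {g : X → ℝ}
    (hg : HasCompactSupport g) : HasCompactSupport fun x => g x ^ 2 :=
  hg.mono' fun x hx => subset_tsupport g fun h => hx (by simp [h])

theorem integrable_sq_of_hasCompactSupport {X : Type*} [TopologicalSpace X] [MeasurableSpace X]
    [OpensMeasurableSpace X] {μ : Measure X} [IsFiniteMeasureOnCompacts μ] {g : X → ℝ}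
    (hg : Continuous g) (hgs : HasCompactSupport g) : Integrable (fun x => g x ^ 2) μ := by
  have hc : Continuous fun x => g x ^ 2 := hg.pow 2
  exact hc.integrable_of_hasCompactSupport hgs.sq

/-- Beam inequality in the absence of conjugate points: for `f` compactly supported in `(0, L)`,
the square of the second derivative minus `k ^ 4 * f ^ 2` is a square plus an exact derivative as
long as the Wronskian `1 - cos (k x) cosh (k x)` of the principal solutions does not vanish. -/
theorem integral_sq_le_integral_deriv_deriv_sq {k L : ℝ}
    (hk : ∀ x ∈ Set.Ioo 0 L, 1 - cos (k * x) * cosh (k * x) ≠ 0)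
    {f : ℝ → ℝ} (hf : ContDiff ℝ (⊤ : ℕ∞) f) (hc : HasCompactSupport f)
    (hs : tsupport f ⊆ Set.Ioo 0 L) :
    k ^ 4 * ∫ x, f x ^ 2 ≤ ∫ x, deriv (deriv f) x ^ 2 := by
  have hf1 : ContDiff ℝ (⊤ : ℕ∞) (deriv f) := (contDiff_infty_iff_deriv.1 hf).2
  have hf2 : ContDiff ℝ (⊤ : ℕ∞) (deriv (deriv f)) := (contDiff_infty_iff_deriv.1 hf1).2
  have hd0 : ∀ x, HasDerivAt f (deriv f x) x := fun x =>
    (hf.differentiable (by simp) x).hasDerivAt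
  have hd1 : ∀ x, HasDerivAt (deriv f) (deriv (deriv f) x) x := fun x =>
    (hf1.differentiable (by simp) x).hasDerivAt
  set W : ℝ → ℝ := fun x => 1 - cos (k * x) * cosh (k * x) with hW
  set W1 : ℝ → ℝ := fun x => k * (sin (k * x) * cosh (k * x) - cos (k * x) * sinh (k * x)) with hW1
  set W2 : ℝ → ℝ := fun x => k ^ 2 * (2 * sin (k * x) * sinh (k * x)) with hW2
  set W3 : ℝ → ℝ := fun x =>
    k ^ 3 * (2 * (cos (k * x) * sinh (k * x) + sin (k * x) * cosh (k * x))) with hW3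
  set W4 : ℝ → ℝ := fun x => k ^ 4 * (4 * cos (k * x) * cosh (k * x)) with hW4
  have hlin : ∀ x, HasDerivAt (fun x : ℝ => k * x) k x := fun x => by
    simpa using (hasDerivAt_id x).const_mul k
  have hDW : ∀ x, HasDerivAt W (W1 x) x := fun x => by
    refine (((hlin x).cos.mul (hlin x).cosh).const_sub 1).congr_deriv ?_
    simp only [hW1]; ring
  have hDW1 : ∀ x, HasDerivAt W1 (W2 x) x := fun x => by
    refine ((((hlin x).sin.mul (hlin x).cosh).sub
      ((hlin x).cos.mul (hlin x).sinh)).const_mul k).congr_deriv ?_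
    simp only [hW2]; ring
  have hDW2 : ∀ x, HasDerivAt W2 (W3 x) x := fun x => by
    refine ((((hlin x).sin.const_mul 2).mul (hlin x).sinh).const_mul (k ^ 2)).congr_deriv ?_
    simp only [hW3]; ring
  have hDW3 : ∀ x, HasDerivAt W3 (W4 x) x := fun x => by
    refine (((((hlin x).cos.mul (hlin x).sinh).add
      ((hlin x).sin.mul (hlin x).cosh)).const_mul 2).const_mul (k ^ 3)).congr_deriv ?_
    simp only [hW4]; ring
  have hric : ∀ x, 2 * W x * W4 x - 2 * W3 x * W1 x + W2 x ^ 2 + 4 * k ^ 4 * W x ^ 2 = 0 := by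
    intro x
    have h1 := sin_sq_add_cos_sq (k * x)
    have h2 := cosh_sq (k * x)
    simp only [hW, hW1, hW2, hW3, hW4]
    linear_combination (4 * k ^ 4 * (sinh (k * x) ^ 2 - cosh (k * x) ^ 2)) * h1 - 4 * k ^ 4 * h2
  set F : ℝ → ℝ := fun x =>
    (W1 x * deriv f x ^ 2 - W2 x * (f x * deriv f x) + W3 x / 2 * f x ^ 2) / W x with hF
  set G : ℝ → ℝ := fun x => deriv (deriv f) x -
    (W1 x * deriv f x - W2 x / 2 * f x) / W x with hG
  have hW0 : ∀ x ∈ tsupport f, W x ≠ 0 := fun x hx => hk x (hs hx)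
  have hz : ∀ x, x ∉ tsupport f → f =ᶠ[nhds x] 0 := fun x hx =>
    notMem_tsupport_iff_eventuallyEq.1 hx
  have hz1 : ∀ x, x ∉ tsupport f → deriv f =ᶠ[nhds x] 0 := fun x hx => by
    simpa using (hz x hx).deriv
  have hz2 : ∀ x, x ∉ tsupport f → deriv (deriv f) =ᶠ[nhds x] 0 := fun x hx => by
    simpa using (hz1 x hx).deriv
  have hzF : ∀ x, x ∉ tsupport f → F =ᶠ[nhds x] 0 := fun x hx => by
    filter_upwards [hz x hx, hz1 x hx] with y h0 h1
    simp [hF, h0, h1]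
  have hzG : ∀ x, x ∉ tsupport f → G =ᶠ[nhds x] 0 := fun x hx => by
    filter_upwards [hz x hx, hz1 x hx, hz2 x hx] with y h0 h1 h2
    simp [hG, h0, h1, h2]
  have hDF : ∀ x, HasDerivAt F (deriv (deriv f) x ^ 2 - k ^ 4 * f x ^ 2 - G x ^ 2) x := by
    intro x
    by_cases hx : x ∈ tsupport f
    · have hWx := hW0 x hx
      refine (((((hDW1 x).mul ((hd1 x).pow 2)).sub ((hDW2 x).mul ((hd0 x).mul (hd1 x)))).add
        (((hDW3 x).div_const 2).mul ((hd0 x).pow 2))).div (hDW x) hWx).congr_deriv ?_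
      have h := hric x
      simp only [hG, Pi.mul_apply, Pi.add_apply, Pi.sub_apply, Pi.pow_apply]
      generalize W x = w at *
      generalize W1 x = w1 at *
      generalize W2 x = w2 at *
      generalize W3 x = w3 at *
      generalize W4 x = w4 at *
      field_simp
      push_cast
      linear_combination (f x ^ 2) * h
    · have h0 := (hz x hx).eq_of_nhds
      have h2 := (hz2 x hx).eq_of_nhds
      have hG0 := (hzG x hx).eq_of_nhds
      simp only [h0, h2, hG0, Pi.zero_apply]
      simpa using (hasDerivAt_const x (0 : ℝ)).congr_of_eventuallyEq (hzF x hx)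
  have hGc : Continuous G := by
    rw [continuous_iff_continuousAt]
    intro x
    by_cases hx : x ∈ tsupport f
    · have hWx := hW0 x hx
      exact hf2.continuous.continuousAt.sub
        ((((hDW1 x).continuousAt.mul (hd1 x).continuousAt).sub
          (((hDW2 x).continuousAt.div_const 2).mul (hd0 x).continuousAt)).div
            (hDW x).continuousAt hWx)
    · exact continuousAt_const.congr (hzG x hx).symm
  have hGs : HasCompactSupport G := HasCompactSupport.intro hc fun x hx => (hzG x hx).eq_of_nhds
  have hFs : HasCompactSupport F := HasCompactSupport.intro hc fun x hx => (hzF x hx).eq_of_nhds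
  have hFc : Continuous F := continuous_iff_continuousAt.2 fun x => (hDF x).continuousAt
  have i0 := (integrable_sq_of_hasCompactSupport (μ := volume) hf.continuous hc).const_mul (k ^ 4)
  have i2 := integrable_sq_of_hasCompactSupport (μ := volume) hf2.continuous hc.deriv.deriv
  have iG := integrable_sq_of_hasCompactSupport (μ := volume) hGc hGs
  have hint := integral_eq_zero_of_hasDerivAt_of_integrable hDF ((i2.sub i0).sub iG)
    (hFc.integrable_of_hasCompactSupport hFs)
  have i20 : Integrable fun x => deriv (deriv f) x ^ 2 - k ^ 4 * f x ^ 2 := i2.sub i0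
  rw [integral_sub i20 iG, integral_sub i2 i0, integral_const_mul] at hint
  have : 0 ≤ ∫ x, G x ^ 2 := integral_nonneg fun x => sq_nonneg _
  linarith

theorem ContDiff.pd {u : ℝ × ℝ → ℝ} (hu : ContDiff ℝ (⊤ : ℕ∞) u) (v : ℝ × ℝ) :
    ContDiff ℝ (⊤ : ℕ∞) (pd v u) :=
  (hu.fderiv_right (m := (⊤ : ℕ∞)) (by simp)).clm_apply contDiff_const

theorem HasCompactSupport.pd {u : ℝ × ℝ → ℝ} (hu : HasCompactSupport u) (v : ℝ × ℝ) :
    HasCompactSupport (pd v u) :=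
  hu.fderiv_apply ℝ v

theorem pd_fst_apply {u : ℝ × ℝ → ℝ} (hu : ContDiff ℝ (⊤ : ℕ∞) u) (x y : ℝ) :
    pd (1, 0) u (x, y) = deriv (fun t => u (t, y)) x :=
  (((hu.differentiable (by simp) (x, y)).hasFDerivAt.comp_hasDerivAt x
    ((hasDerivAt_id x).prodMk (hasDerivAt_const x y))).deriv).symm

theorem pd_snd_apply {u : ℝ × ℝ → ℝ} (hu : ContDiff ℝ (⊤ : ℕ∞) u) (x y : ℝ) :
    pd (0, 1) u (x, y) = deriv (fun t => u (x, t)) y :=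
  (((hu.differentiable (by simp) (x, y)).hasFDerivAt.comp_hasDerivAt y
    ((hasDerivAt_const y x).prodMk (hasDerivAt_id y))).deriv).symm

theorem uxx_apply {u : ℝ × ℝ → ℝ} (hu : ContDiff ℝ (⊤ : ℕ∞) u) (x y : ℝ) :
    uxx u (x, y) = deriv (deriv fun t => u (t, y)) x := by
  rw [uxx, pd_fst_apply (hu.pd _)]
  simp only [pd_fst_apply hu]

theorem uyy_apply {u : ℝ × ℝ → ℝ} (hu : ContDiff ℝ (⊤ : ℕ∞) u) (x y : ℝ) :
    uyy u (x, y) = deriv (deriv fun t => u (x, t)) y := by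
  rw [uyy, pd_snd_apply (hu.pd _)]
  simp only [pd_snd_apply hu]

theorem integrable_uxx_sq {u : ℝ × ℝ → ℝ} (hu : ContDiff ℝ (⊤ : ℕ∞) u)
    (hc : HasCompactSupport u) : Integrable fun p => uxx u p ^ 2 :=
  integrable_sq_of_hasCompactSupport ((hu.pd _).pd _).continuous ((hc.pd _).pd _)

theorem integrable_uyy_sq {u : ℝ × ℝ → ℝ} (hu : ContDiff ℝ (⊤ : ℕ∞) u)
    (hc : HasCompactSupport u) : Integrable fun p => uyy u p ^ 2 :=
  integrable_sq_of_hasCompactSupport ((hu.pd _).pd _).continuous ((hc.pd _).pd _)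

theorem one_sub_cos_mul_cosh_ne_zero {ω : ℝ}
    (hω : IsLeast {x : ℝ | 0 < x ∧ Real.cos x * Real.cosh x = 1} ω) {L : ℝ} (hL : 0 < L) :
    ∀ x ∈ Set.Ioo 0 L, 1 - cos (ω / L * x) * cosh (ω / L * x) ≠ 0 := by
  rintro x ⟨hx0, hxL⟩ h
  have hω0 : 0 < ω := hω.1.1
  have hle : ω ≤ ω / L * x := hω.2 ⟨by positivity, by linarith⟩
  have : ω / L * x < ω / L * L := mul_lt_mul_of_pos_left hxL (by positivity)
  rw [div_mul_cancel₀ _ hL.ne'] at this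
  linarith

theorem integral_sq_le_integral_uxx_sq {k L M : ℝ}
    (hk : ∀ x ∈ Set.Ioo 0 L, 1 - cos (k * x) * cosh (k * x) ≠ 0)
    {u : ℝ × ℝ → ℝ} (hu : Adm (Set.Ioo 0 L ×ˢ Set.Ioo 0 M) u) :
    k ^ 4 * ∫ p, u p ^ 2 ≤ ∫ p, uxx u p ^ 2 := by
  obtain ⟨hu, hc, hs⟩ := hu
  have i0 := integrable_sq_of_hasCompactSupport (μ := volume) hu.continuous hc
  have i2 := integrable_uxx_sq hu hc
  rw [Measure.volume_eq_prod] at i0 i2 ⊢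
  rw [integral_prod_symm _ i0, integral_prod_symm _ i2, ← integral_const_mul]
  refine integral_mono (i0.integral_prod_right.const_mul _) i2.integral_prod_right fun y => ?_
  simp only [uxx_apply hu]
  have hsub : tsupport (fun t => u (t, y)) ⊆ (fun t => (t, y)) ⁻¹' tsupport u :=
    tsupport_comp_subset_preimage u (by fun_prop)
  have hcl : HasCompactSupport fun t => u (t, y) :=
    hc.comp_isClosedEmbedding (Function.LeftInverse.isClosedEmbedding (f := Prod.fst)
      (fun _ => rfl) (by fun_prop) (by fun_prop))
  exact integral_sq_le_integral_deriv_deriv_sq hk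
    (hu.comp (contDiff_id.prodMk contDiff_const)) hcl fun t ht => (hs (hsub ht)).1

theorem integral_sq_le_integral_uyy_sq {k L M : ℝ}
    (hk : ∀ x ∈ Set.Ioo 0 M, 1 - cos (k * x) * cosh (k * x) ≠ 0)
    {u : ℝ × ℝ → ℝ} (hu : Adm (Set.Ioo 0 L ×ˢ Set.Ioo 0 M) u) :
    k ^ 4 * ∫ p, u p ^ 2 ≤ ∫ p, uyy u p ^ 2 := by
  obtain ⟨hu, hc, hs⟩ := hu
  have i0 := integrable_sq_of_hasCompactSupport (μ := volume) hu.continuous hc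
  have i2 := integrable_uyy_sq hu hc
  rw [Measure.volume_eq_prod] at i0 i2 ⊢
  rw [integral_prod _ i0, integral_prod _ i2, ← integral_const_mul]
  refine integral_mono (i0.integral_prod_left.const_mul _) i2.integral_prod_left fun x => ?_
  simp only [uyy_apply hu]
  have hsub : tsupport (fun t => u (x, t)) ⊆ (fun t => (x, t)) ⁻¹' tsupport u :=
    tsupport_comp_subset_preimage u (by fun_prop)
  have hcl : HasCompactSupport fun t => u (x, t) :=
    hc.comp_isClosedEmbedding (Function.LeftInverse.isClosedEmbedding (f := Prod.snd)
      (fun _ => rfl) (by fun_prop) (by fun_prop))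
  exact integral_sq_le_integral_deriv_deriv_sq hk
    (hu.comp (contDiff_const.prodMk contDiff_id)) hcl fun t ht => (hs (hsub ht)).2

theorem anisotropic_lower_bound {ω : ℝ}
    (hω : IsLeast {x : ℝ | 0 < x ∧ Real.cos x * Real.cosh x = 1} ω)
    {a : ℝ} (ha : 0 < a) {u : ℝ × ℝ → ℝ} (hu : Adm (Rect a) u) :
    ω ^ 4 * (a ^ 4 + a ^ (-4 : ℤ)) * ∫ p, (u p) ^ 2 ≤
      ∫ p, ((uxx u p) ^ 2 + (uyy u p) ^ 2) := by
  rw [integral_add (integrable_uxx_sq hu.1 hu.2.1) (integrable_uyy_sq hu.1 hu.2.1)]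
  have h1 := integral_sq_le_integral_uxx_sq (one_sub_cos_mul_cosh_ne_zero hω ha) hu
  have h2 := integral_sq_le_integral_uyy_sq
    (one_sub_cos_mul_cosh_ne_zero hω (one_div_pos.2 ha)) hu
  have e : ω ^ 4 * (a ^ 4 + a ^ (-4 : ℤ)) = (ω / a) ^ 4 + (ω / (1 / a)) ^ 4 := by
    rw [zpow_neg]
    norm_cast
    field_simp
    ring
  rw [e, add_mul]
  exact add_le_add h1 h2

/-- A smooth step vanishing on `(-∞, 1]` and equal to one on `[2, ∞)`. -/
def smoothStep (t : ℝ) : ℝ := smoothTransition (t - 1)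

theorem contDiff_smoothStep : ContDiff ℝ (⊤ : ℕ∞) smoothStep :=
  smoothTransition.contDiff.comp (contDiff_id.sub contDiff_const)

theorem smoothStep_of_le {t : ℝ} (h : t ≤ 1) : smoothStep t = 0 :=
  smoothTransition.zero_of_nonpos (by linarith)

theorem smoothStep_of_ge {t : ℝ} (h : 2 ≤ t) : smoothStep t = 1 :=
  smoothTransition.one_of_one_le (by linarith)

theorem abs_smoothStep_le (t : ℝ) : |smoothStep t| ≤ 1 :=
  (abs_of_nonneg (smoothTransition.nonneg (t - 1))).trans_le (smoothTransition.le_one _)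

theorem deriv_smoothStep_of_notMem {t : ℝ} (h : t ∉ Set.Icc (1 : ℝ) 2) :
    deriv smoothStep t = 0 := by
  rcases lt_or_ge t 1 with h1 | h1
  · have : smoothStep =ᶠ[nhds t] fun _ => 0 := by
      filter_upwards [Iio_mem_nhds h1] with y hy using smoothStep_of_le (le_of_lt hy)
    simpa using this.deriv_eq
  · have h2 : 2 < t := not_le.1 fun h2 => h ⟨h1, h2⟩
    have : smoothStep =ᶠ[nhds t] fun _ => 1 := by
      filter_upwards [Ioi_mem_nhds h2] with y hy using smoothStep_of_ge (le_of_lt hy)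
    simpa using this.deriv_eq

theorem deriv_deriv_smoothStep_of_notMem {t : ℝ} (h : t ∉ Set.Icc (1 : ℝ) 2) :
    deriv (deriv smoothStep) t = 0 := by
  have : deriv smoothStep =ᶠ[nhds t] fun _ => 0 := by
    filter_upwards [isClosed_Icc.isOpen_compl.mem_nhds h] with y hy
      using deriv_smoothStep_of_notMem hy
  simpa using this.deriv_eq

theorem contDiff_deriv_smoothStep : ContDiff ℝ (⊤ : ℕ∞) (deriv smoothStep) :=
  (contDiff_infty_iff_deriv.1 contDiff_smoothStep).2

theorem contDiff_deriv_deriv_smoothStep : ContDiff ℝ (⊤ : ℕ∞) (deriv (deriv smoothStep)) :=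
  (contDiff_infty_iff_deriv.1 contDiff_deriv_smoothStep).2

theorem exists_bound_deriv_smoothStep :
    ∃ C, 0 ≤ C ∧ ∀ t, |deriv smoothStep t * t| ≤ C ∧ |deriv smoothStep t * t ^ 2| ≤ C ∧
      |deriv (deriv smoothStep) t * t ^ 2| ≤ C := by
  have key : ∀ g : ℝ → ℝ, Continuous g → (∀ t, t ∉ Set.Icc (1 : ℝ) 2 → g t = 0) →
      ∃ C, ∀ t, |g t| ≤ C := fun g hg h0 =>
    hg.bounded_above_of_compact_support (HasCompactSupport.intro isCompact_Icc fun t => h0 t)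
  have c1 := contDiff_deriv_smoothStep.continuous
  have c2 := contDiff_deriv_deriv_smoothStep.continuous
  obtain ⟨A, hA⟩ := key (fun t => deriv smoothStep t * t) (by fun_prop)
    fun t ht => by simp [deriv_smoothStep_of_notMem ht]
  obtain ⟨B, hB⟩ := key (fun t => deriv smoothStep t * t ^ 2) (by fun_prop)
    fun t ht => by simp [deriv_smoothStep_of_notMem ht]
  obtain ⟨D, hD⟩ := key (fun t => deriv (deriv smoothStep) t * t ^ 2) (by fun_prop)
    fun t ht => by simp [deriv_deriv_smoothStep_of_notMem ht]
  refine ⟨max A (max B D), (abs_nonneg _).trans ((hA 0).trans (le_max_left _ _)), fun t =>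
    ⟨(hA t).trans (le_max_left _ _), (hB t).trans ((le_max_left _ _).trans (le_max_right _ _)),
      (hD t).trans ((le_max_right _ _).trans (le_max_right _ _))⟩⟩

/-- The function `φ` truncated to `{x | 1 < N x (1 - x)}`. -/
def truncation (φ : ℝ → ℝ) (N : ℝ) (x : ℝ) : ℝ := smoothStep (N * (x * (1 - x))) * φ x

theorem contDiff_truncation {φ : ℝ → ℝ} (hφ : ContDiff ℝ (⊤ : ℕ∞) φ) (N : ℝ) :
    ContDiff ℝ (⊤ : ℕ∞) (truncation φ N) :=
  (contDiff_smoothStep.comp (by fun_prop)).mul hφ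

theorem tsupport_truncation_subset (φ : ℝ → ℝ) {N : ℝ} (hN : 0 < N) :
    tsupport (truncation φ N) ⊆ Set.Ioo 0 1 := by
  have hcl : IsClosed {x : ℝ | 1 ≤ N * (x * (1 - x))} := isClosed_le (by fun_prop) (by fun_prop)
  have h1 : tsupport (truncation φ N) ⊆ {x : ℝ | 1 ≤ N * (x * (1 - x))} := by
    refine closure_minimal (fun x hx => ?_) hcl
    by_contra h
    exact hx (by simp [truncation, smoothStep_of_le (not_le.1 h).le])
  intro x hx
  have h2 : 0 < x * (1 - x) := by
    by_contra h
    have h3 : 1 ≤ N * (x * (1 - x)) := h1 hx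
    nlinarith [mul_nonneg hN.le (neg_nonneg.2 (not_lt.1 h))]
  constructor <;> nlinarith

theorem deriv_deriv_truncation {φ : ℝ → ℝ} (hφ : ContDiff ℝ (⊤ : ℕ∞) φ) (N x : ℝ) :
    deriv (deriv (truncation φ N)) x =
      deriv (deriv smoothStep) (N * (x * (1 - x))) * (N * (1 - 2 * x)) ^ 2 * φ x +
      deriv smoothStep (N * (x * (1 - x))) * (-2 * N) * φ x +
      2 * (deriv smoothStep (N * (x * (1 - x))) * (N * (1 - 2 * x))) * deriv φ x +
      smoothStep (N * (x * (1 - x))) * deriv (deriv φ) x := by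
  have hφ1 : ContDiff ℝ (⊤ : ℕ∞) (deriv φ) := (contDiff_infty_iff_deriv.1 hφ).2
  have d0 : ∀ x, HasDerivAt φ (deriv φ x) x := fun x =>
    (hφ.differentiable (by simp) x).hasDerivAt
  have d1 : ∀ x, HasDerivAt (deriv φ) (deriv (deriv φ) x) x := fun x =>
    (hφ1.differentiable (by simp) x).hasDerivAt
  have hw : ∀ x : ℝ, HasDerivAt (fun x => N * (x * (1 - x))) (N * (1 - 2 * x)) x := fun x => by
    refine (((hasDerivAt_id x).mul ((hasDerivAt_id x).const_sub 1)).const_mul N).congr_deriv ?_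
    simp only [id_eq]; ring
  have hw1 : ∀ x : ℝ, HasDerivAt (fun x => N * (1 - 2 * x)) (-2 * N) x := fun x => by
    refine ((((hasDerivAt_id x).const_mul 2).const_sub 1).const_mul N).congr_deriv ?_
    ring
  have s0 : ∀ x, HasDerivAt (fun x => smoothStep (N * (x * (1 - x))))
      (deriv smoothStep (N * (x * (1 - x))) * (N * (1 - 2 * x))) x := fun x =>
    (contDiff_smoothStep.differentiable (by simp) _).hasDerivAt.comp x (hw x)
  have s1 : ∀ x, HasDerivAt (fun x => deriv smoothStep (N * (x * (1 - x))))
      (deriv (deriv smoothStep) (N * (x * (1 - x))) * (N * (1 - 2 * x))) x := fun x =>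
    (contDiff_deriv_smoothStep.differentiable (by simp) _).hasDerivAt.comp x (hw x)
  have e : deriv (truncation φ N) = fun x =>
      deriv smoothStep (N * (x * (1 - x))) * (N * (1 - 2 * x)) * φ x +
        smoothStep (N * (x * (1 - x))) * deriv φ x :=
    funext fun x => ((s0 x).mul (d0 x)).deriv
  rw [e]
  refine (((((s1 x).mul (hw1 x)).mul (d0 x)).add ((s0 x).mul (d1 x))).congr_deriv ?_).deriv
  simp only [Pi.mul_apply]
  ring

theorem eventually_two_lt_mul {x : ℝ} (hx : x ∈ Set.Ioo (0 : ℝ) 1) :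
    ∀ᶠ n : ℕ in atTop, 2 < ((n : ℝ) + 1) * (x * (1 - x)) := by
  have hw : 0 < x * (1 - x) := mul_pos hx.1 (by linarith [hx.2])
  have : Tendsto (fun n : ℕ => ((n : ℝ) + 1) * (x * (1 - x))) atTop atTop :=
    (tendsto_atTop_add_const_right _ _ tendsto_natCast_atTop_atTop).atTop_mul_const hw
  exact this.eventually_gt_atTop 2

theorem exists_bound_of_clamped {φ : ℝ → ℝ} (hφ : ContDiff ℝ (⊤ : ℕ∞) φ)
    (h00 : φ 0 = 0) (h01 : deriv φ 0 = 0) (h10 : φ 1 = 0) (h11 : deriv φ 1 = 0) :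
    ∃ K, 0 ≤ K ∧ ∀ x ∈ Set.Ioo (0 : ℝ) 1, |φ x| ≤ K * (x * (1 - x)) ^ 2 ∧
      |deriv φ x| ≤ K * (x * (1 - x)) ∧ |deriv (deriv φ) x| ≤ K := by
  have hφ1 : ContDiff ℝ (⊤ : ℕ∞) (deriv φ) := (contDiff_infty_iff_deriv.1 hφ).2
  have hφ2 : ContDiff ℝ (⊤ : ℕ∞) (deriv (deriv φ)) := (contDiff_infty_iff_deriv.1 hφ1).2
  obtain ⟨M, hM⟩ := isCompact_Icc.exists_bound_of_continuousOn (s := Set.Icc (0 : ℝ) 1)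
    hφ2.continuous.continuousOn
  have hM0 : 0 ≤ M := (norm_nonneg _).trans (hM 0 ⟨le_rfl, zero_le_one⟩)
  have mvt : ∀ g : ℝ → ℝ, Differentiable ℝ g → ∀ a b C : ℝ, a ≤ b →
      (∀ t ∈ Set.Icc a b, |deriv g t| ≤ C) → |g b - g a| ≤ C * (b - a) := by
    intro g hg a b C hab h
    have := (convex_Icc a b).norm_image_sub_le_of_norm_deriv_le (f := g) (C := C)
      (fun t _ => hg t) h ⟨le_rfl, hab⟩ ⟨hab, le_rfl⟩
    rwa [Real.norm_eq_abs, Real.norm_eq_abs, abs_of_nonneg (sub_nonneg.2 hab)] at this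
  have hD := hφ.differentiable (by simp)
  have hD1 := hφ1.differentiable (by simp)
  have l1 : ∀ x ∈ Set.Icc (0 : ℝ) 1, |deriv φ x| ≤ M * x := fun x hx => by
    simpa [h01] using mvt _ hD1 0 x M hx.1 fun t ht => hM t ⟨ht.1, ht.2.trans hx.2⟩
  have r1 : ∀ x ∈ Set.Icc (0 : ℝ) 1, |deriv φ x| ≤ M * (1 - x) := fun x hx => by
    simpa [h11] using mvt _ hD1 x 1 M hx.2 fun t ht => hM t ⟨hx.1.trans ht.1, ht.2⟩
  have l0 : ∀ x ∈ Set.Icc (0 : ℝ) 1, |φ x| ≤ M * x * x := fun x hx => by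
    simpa [h00] using mvt _ hD 0 x (M * x) hx.1 fun t ht =>
      (l1 t ⟨ht.1, ht.2.trans hx.2⟩).trans (mul_le_mul_of_nonneg_left ht.2 hM0)
  have r0 : ∀ x ∈ Set.Icc (0 : ℝ) 1, |φ x| ≤ M * (1 - x) * (1 - x) := fun x hx => by
    simpa [h10] using mvt _ hD x 1 (M * (1 - x)) hx.2 fun t ht =>
      (r1 t ⟨hx.1.trans ht.1, ht.2⟩).trans (mul_le_mul_of_nonneg_left (by linarith [ht.1]) hM0)
  refine ⟨4 * M, by positivity, fun x hx => ?_⟩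
  have hx' := Set.Ioo_subset_Icc_self hx
  obtain ⟨hx0, hx1⟩ := hx
  have hm : min x (1 - x) ≤ 2 * (x * (1 - x)) := by
    rcases le_total x (1 / 2) with h | h
    · exact (min_le_left _ _).trans (by nlinarith)
    · exact (min_le_right _ _).trans (by nlinarith)
  have hm0 : 0 ≤ min x (1 - x) := le_min hx0.le (by linarith)
  have b1 : |deriv φ x| ≤ M * min x (1 - x) := by
    rcases min_choice x (1 - x) with h | h <;> rw [h]
    exacts [l1 x hx', r1 x hx']
  have b0 : |φ x| ≤ M * (min x (1 - x)) ^ 2 := by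
    rcases min_choice x (1 - x) with h | h <;> rw [h, sq, ← mul_assoc]
    exacts [l0 x hx', r0 x hx']
  refine ⟨b0.trans ?_, b1.trans ?_, (hM x hx').trans (by linarith)⟩
  · calc M * (min x (1 - x)) ^ 2 ≤ M * (2 * (x * (1 - x))) ^ 2 := by gcongr
      _ = _ := by ring
  · have h3 : 0 ≤ x * (1 - x) := mul_nonneg hx0.le (by linarith)
    calc M * min x (1 - x) ≤ M * (2 * (x * (1 - x))) := by gcongr
      _ ≤ _ := by nlinarith [mul_nonneg hM0 h3]

theorem exists_bound_deriv_deriv_truncation {φ : ℝ → ℝ} (hφ : ContDiff ℝ (⊤ : ℕ∞) φ)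
    (h00 : φ 0 = 0) (h01 : deriv φ 0 = 0) (h10 : φ 1 = 0) (h11 : deriv φ 1 = 0) :
    ∃ K, ∀ N : ℝ, 1 ≤ N → ∀ x ∈ Set.Ioo (0 : ℝ) 1,
      |truncation φ N x| ≤ K ∧ |deriv (deriv (truncation φ N)) x| ≤ K := by
  obtain ⟨K, hK0, hK⟩ := exists_bound_of_clamped hφ h00 h01 h10 h11
  obtain ⟨C, hC0, hC⟩ := exists_bound_deriv_smoothStep
  refine ⟨C * K + 2 * C * K + 2 * C * K + K, fun N hN x hx => ?_⟩
  obtain ⟨k0, k1, k2⟩ := hK x hx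
  have hN0 : 0 < N := by linarith
  have hCK : 0 ≤ C * K := mul_nonneg hC0 hK0
  obtain ⟨c1, c2, c3⟩ := hC (N * (x * (1 - x)))
  have hst := abs_smoothStep_le (N * (x * (1 - x)))
  rw [deriv_deriv_truncation hφ]
  obtain ⟨hx0, hx1⟩ := hx
  have hw0 : 0 < x * (1 - x) := mul_pos hx0 (by linarith)
  have hw1 : x * (1 - x) ≤ 1 := by nlinarith
  have hz : |1 - 2 * x| ≤ 1 := abs_le.2 ⟨by linarith, by linarith⟩
  unfold truncation
  generalize x * (1 - x) = w at *
  generalize deriv (deriv smoothStep) (N * w) = s2 at *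
  generalize deriv smoothStep (N * w) = s1 at *
  generalize smoothStep (N * w) = s0 at *
  generalize 1 - 2 * x = z at *
  simp only [abs_mul, abs_pow, abs_of_pos hN0, abs_of_pos hw0] at c1 c2 c3
  have t1 : |s2 * (N * z) ^ 2 * φ x| ≤ C * K := by
    rw [abs_mul, abs_mul, abs_pow, abs_mul, abs_of_pos hN0]
    calc |s2| * (N * |z|) ^ 2 * |φ x| ≤ |s2| * (N * 1) ^ 2 * (K * w ^ 2) := by gcongr
      _ = (|s2| * (N * w) ^ 2) * K := by ring
      _ ≤ C * K := by gcongr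
  have t2 : |s1 * (-2 * N) * φ x| ≤ 2 * C * K := by
    rw [abs_mul, abs_mul, abs_mul, abs_of_pos hN0, abs_neg, abs_two]
    calc |s1| * (2 * N) * |φ x| ≤ |s1| * (2 * N) * (K * w ^ 2) := by gcongr
      _ = 2 * (|s1| * (N * w)) * K * w := by ring
      _ ≤ 2 * C * K * 1 := by gcongr
      _ = _ := mul_one _
  have t3 : |2 * (s1 * (N * z)) * deriv φ x| ≤ 2 * C * K := by
    rw [abs_mul, abs_mul, abs_mul, abs_mul, abs_of_pos hN0, abs_two]
    calc 2 * (|s1| * (N * |z|)) * |deriv φ x| ≤ 2 * (|s1| * (N * 1)) * (K * w) := by gcongr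
      _ = 2 * (|s1| * (N * w)) * K := by ring
      _ ≤ 2 * C * K := by gcongr
  have t4 : |s0 * deriv (deriv φ) x| ≤ K := by
    rw [abs_mul]
    calc |s0| * |deriv (deriv φ) x| ≤ 1 * K := by gcongr
      _ = K := one_mul _
  constructor
  · rw [abs_mul]
    calc |s0| * |φ x| ≤ 1 * (K * w ^ 2) := by gcongr
      _ ≤ 1 * (K * 1 ^ 2) := by gcongr
      _ ≤ _ := by linarith
  · refine (abs_add_le _ _).trans (add_le_add ((abs_add_le _ _).trans (add_le_add
      ((abs_add_le _ _).trans (add_le_add t1 t2)) t3)) t4)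

theorem tendsto_integral_sq_of_eventually_eq {g : ℕ → ℝ → ℝ} {h : ℝ → ℝ} {K : ℝ}
    (hg : ∀ n, Continuous (g n)) (h0 : ∀ n x, x ∉ Set.Ioo (0 : ℝ) 1 → g n x = 0)
    (hK : ∀ n, ∀ x ∈ Set.Ioo (0 : ℝ) 1, |g n x| ≤ K)
    (hlim : ∀ x ∈ Set.Ioo (0 : ℝ) 1, ∀ᶠ n in atTop, g n x = h x) :
    Tendsto (fun n => ∫ x, g n x ^ 2) atTop (nhds (∫ x in Set.Ioo 0 1, h x ^ 2)) := by
  have e : ∀ n, ∫ x, g n x ^ 2 = ∫ x in Set.Ioo 0 1, g n x ^ 2 := fun n =>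
    (setIntegral_eq_integral_of_forall_compl_eq_zero fun x hx => by simp [h0 n x hx]).symm
  simp only [e]
  refine tendsto_integral_of_dominated_convergence (fun _ => K ^ 2)
    (fun n => ((hg n).pow 2).aestronglyMeasurable) (integrable_const _) (fun n => ?_) ?_
  · filter_upwards [ae_restrict_mem measurableSet_Ioo] with x hx
    rw [Real.norm_eq_abs, abs_pow]
    gcongr
    exact hK n x hx
  · filter_upwards [ae_restrict_mem measurableSet_Ioo] with x hx
    exact tendsto_const_nhds.congr' ((hlim x hx).mono fun n hn => by simp only [hn])

theorem tendsto_integral_truncation_sq {φ : ℝ → ℝ} (hφ : ContDiff ℝ (⊤ : ℕ∞) φ)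
    (h00 : φ 0 = 0) (h01 : deriv φ 0 = 0) (h10 : φ 1 = 0) (h11 : deriv φ 1 = 0) :
    Tendsto (fun n : ℕ => ∫ x, truncation φ (n + 1) x ^ 2) atTop
      (nhds (∫ x in Set.Ioo 0 1, φ x ^ 2)) ∧
    Tendsto (fun n : ℕ => ∫ x, deriv (deriv (truncation φ (n + 1))) x ^ 2) atTop
      (nhds (∫ x in Set.Ioo 0 1, deriv (deriv φ) x ^ 2)) := by
  obtain ⟨K, hK⟩ := exists_bound_deriv_deriv_truncation hφ h00 h01 h10 h11
  have hN : ∀ n : ℕ, (0 : ℝ) < n + 1 := fun n => by positivity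
  have hN1 : ∀ n : ℕ, (1 : ℝ) ≤ n + 1 := fun n => by simp
  have hcd : ∀ n : ℕ, ContDiff ℝ (⊤ : ℕ∞) (truncation φ (n + 1)) := fun n =>
    contDiff_truncation hφ _
  have hz : ∀ (n : ℕ) (x : ℝ), x ∉ Set.Ioo (0 : ℝ) 1 → truncation φ (n + 1) =ᶠ[nhds x] 0 :=
    fun n x hx => notMem_tsupport_iff_eventuallyEq.1
      fun h => hx (tsupport_truncation_subset φ (hN n) h)
  constructor
  · refine tendsto_integral_sq_of_eventually_eq (fun n => (hcd n).continuous)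
      (fun n x hx => (hz n x hx).eq_of_nhds) (fun n x hx => (hK _ (hN1 n) x hx).1) fun x hx => ?_
    filter_upwards [eventually_two_lt_mul hx] with n hn
    simp [truncation, smoothStep_of_ge hn.le]
  · refine tendsto_integral_sq_of_eventually_eq (fun n =>
      ((contDiff_infty_iff_deriv.1 (contDiff_infty_iff_deriv.1 (hcd n)).2).2).continuous)
      (fun n x hx => ?_) (fun n x hx => (hK _ (hN1 n) x hx).2) fun x hx => ?_
    · have := (hz n x hx).deriv.deriv.eq_of_nhds
      simpa using this
    · filter_upwards [eventually_two_lt_mul hx] with n hn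
      have hmem : ((n : ℝ) + 1) * (x * (1 - x)) ∉ Set.Icc (1 : ℝ) 2 := fun h =>
        absurd h.2 (not_le.2 hn)
      rw [deriv_deriv_truncation hφ, smoothStep_of_ge hn.le, deriv_smoothStep_of_notMem hmem,
        deriv_deriv_smoothStep_of_notMem hmem]
      ring

theorem exists_clamped_beam_eigenfunction {ω : ℝ} (hω0 : 0 < ω) (hω : cos ω * cosh ω = 1) :
    ∃ φ : ℝ → ℝ, ContDiff ℝ (⊤ : ℕ∞) φ ∧ φ 0 = 0 ∧ deriv φ 0 = 0 ∧ φ 1 = 0 ∧ deriv φ 1 = 0 ∧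
      0 < ∫ x in Set.Ioo 0 1, φ x ^ 2 ∧
      ∫ x in Set.Ioo 0 1, deriv (deriv φ) x ^ 2 = ω ^ 4 * ∫ x in Set.Ioo 0 1, φ x ^ 2 := by
  have hden : 0 < sinh ω - sin ω := by
    linarith [Real.self_lt_sinh_iff.2 hω0, Real.sin_lt hω0]
  set σ := (cosh ω - cos ω) / (sinh ω - sin ω) with hσ
  have hσ' : σ * (sinh ω - sin ω) = cosh ω - cos ω := div_mul_cancel₀ _ hden.ne'
  have hlin : ∀ x, HasDerivAt (fun x : ℝ => ω * x) ω x := fun x => by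
    simpa using (hasDerivAt_id x).const_mul ω
  set φ : ℝ → ℝ := fun x =>
    cosh (ω * x) - cos (ω * x) - σ * (sinh (ω * x) - sin (ω * x)) with hφ
  set φ1 : ℝ → ℝ := fun x =>
    ω * (sinh (ω * x) + sin (ω * x) - σ * (cosh (ω * x) - cos (ω * x))) with hφ1
  set φ2 : ℝ → ℝ := fun x =>
    ω ^ 2 * (cosh (ω * x) + cos (ω * x) - σ * (sinh (ω * x) + sin (ω * x))) with hφ2
  set φ3 : ℝ → ℝ := fun x =>
    ω ^ 3 * (sinh (ω * x) - sin (ω * x) - σ * (cosh (ω * x) + cos (ω * x))) with hφ3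
  have d0 : ∀ x, HasDerivAt φ (φ1 x) x := fun x => by
    refine (((hlin x).cosh.sub (hlin x).cos).sub
      (((hlin x).sinh.sub (hlin x).sin).const_mul σ)).congr_deriv ?_
    simp only [hφ1]; ring
  have d1 : ∀ x, HasDerivAt φ1 (φ2 x) x := fun x => by
    refine ((((hlin x).sinh.add (hlin x).sin).sub
      (((hlin x).cosh.sub (hlin x).cos).const_mul σ)).const_mul ω).congr_deriv ?_
    simp only [hφ2]; ring
  have d2 : ∀ x, HasDerivAt φ2 (φ3 x) x := fun x => by
    refine ((((hlin x).cosh.add (hlin x).cos).sub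
      (((hlin x).sinh.add (hlin x).sin).const_mul σ)).const_mul (ω ^ 2)).congr_deriv ?_
    simp only [hφ3]; ring
  have d3 : ∀ x, HasDerivAt φ3 (ω ^ 4 * φ x) x := fun x => by
    refine ((((hlin x).sinh.sub (hlin x).sin).sub
      (((hlin x).cosh.add (hlin x).cos).const_mul σ)).const_mul (ω ^ 3)).congr_deriv ?_
    simp only [hφ]; ring
  have e1 : deriv φ = φ1 := funext fun x => (d0 x).deriv
  have e2 : deriv φ1 = φ2 := funext fun x => (d1 x).deriv
  have c0 : Continuous φ := continuous_iff_continuousAt.2 fun x => (d0 x).continuousAt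
  have c2 : Continuous φ2 := continuous_iff_continuousAt.2 fun x => (d2 x).continuousAt
  have z00 : φ 0 = 0 := by simp [hφ]
  have z01 : φ1 0 = 0 := by simp [hφ1]
  have z10 : φ 1 = 0 := by simp only [hφ, mul_one]; linarith
  have z11 : φ1 1 = 0 := by
    have h : (sinh ω - sin ω) * (sinh ω + sin ω - σ * (cosh ω - cos ω)) = 0 := by
      linear_combination (-(cosh ω - cos ω)) * hσ' - sin_sq_add_cos_sq ω - cosh_sq ω + 2 * hω
    simp only [hφ1, mul_one, (mul_eq_zero.1 h).resolve_left hden.ne', mul_zero]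
  have hparts : ∫ x in (0 : ℝ)..1, (φ2 x ^ 2 - ω ^ 4 * φ x ^ 2) = 0 := by
    have h : ∀ x ∈ Set.uIcc (0 : ℝ) 1, HasDerivAt (fun x => φ2 x * φ1 x - φ3 x * φ x)
        (φ2 x ^ 2 - ω ^ 4 * φ x ^ 2) x := fun x _ => by
      refine (((d2 x).mul (d1 x)).sub ((d3 x).mul (d0 x))).congr_deriv ?_
      ring
    rw [intervalIntegral.integral_eq_sub_of_hasDerivAt h
      (Continuous.intervalIntegrable (by fun_prop) _ _)]
    simp [z00, z01, z10, z11]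
  rw [intervalIntegral.integral_sub (Continuous.intervalIntegrable (by fun_prop) _ _)
    (Continuous.intervalIntegrable (by fun_prop) _ _), intervalIntegral.integral_const_mul,
    sub_eq_zero] at hparts
  have hpos : 0 < ∫ x in (0 : ℝ)..1, φ2 x ^ 2 := by
    refine intervalIntegral.integral_pos zero_lt_one (by fun_prop) (fun x _ => sq_nonneg _)
      ⟨0, ⟨le_rfl, zero_le_one⟩, ?_⟩
    have : φ2 0 = 2 * ω ^ 2 := by simp [hφ2]; ring
    rw [this]
    positivity
  have conv : ∀ g : ℝ → ℝ, ∫ x in Set.Ioo 0 1, g x = ∫ x in (0 : ℝ)..1, g x := fun g => by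
    rw [intervalIntegral.integral_of_le zero_le_one, integral_Ioc_eq_integral_Ioo]
  refine ⟨φ, ?_, z00, by rw [e1, z01], z10, by rw [e1, z11], ?_, ?_⟩
  · have hl : ContDiff ℝ (⊤ : ℕ∞) fun x : ℝ => ω * x := contDiff_const.mul contDiff_id
    exact (hl.cosh.sub hl.cos).sub (contDiff_const.mul (hl.sinh.sub hl.sin))
  · rw [conv]
    rw [hparts] at hpos
    exact pos_of_mul_pos_right hpos (by positivity)
  · rw [conv, conv, e1, e2, hparts]

theorem deriv_deriv_comp_mul (f : ℝ → ℝ) (c x : ℝ) :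
    deriv (deriv fun t => f (c * t)) x = c ^ 2 * deriv (deriv f) (c * x) := by
  have h : ∀ g : ℝ → ℝ, (deriv fun t => g (c * t)) = fun t => c * deriv g (c * t) := fun g =>
    funext fun t => by simpa using deriv_comp_mul_left c g t
  rw [h, deriv_const_mul_field, h]
  ring

theorem integral_uxx_sq_add_uyy_sq_scaled_product {f : ℝ → ℝ} (hf : ContDiff ℝ (⊤ : ℕ∞) f)
    (hs : tsupport f ⊆ Set.Ioo 0 1) {a : ℝ} (ha : 0 < a) :
    ∃ u : ℝ × ℝ → ℝ, Adm (Rect a) u ∧ ∫ p, u p ^ 2 = (∫ x, f x ^ 2) ^ 2 ∧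
      ∫ p, (uxx u p ^ 2 + uyy u p ^ 2) =
        (a ^ 4 + a ^ (-4 : ℤ)) * ((∫ x, deriv (deriv f) x ^ 2) * ∫ x, f x ^ 2) := by
  set u : ℝ × ℝ → ℝ := fun p => f (a⁻¹ * p.1) * f (a * p.2) with hu
  have hcd : ContDiff ℝ (⊤ : ℕ∞) u :=
    (hf.comp (contDiff_const.mul contDiff_fst)).mul (hf.comp (contDiff_const.mul contDiff_snd))
  have hsub : tsupport u ⊆ (fun p : ℝ × ℝ => (a⁻¹ * p.1, a * p.2)) ⁻¹'
      (tsupport f ×ˢ tsupport f) := by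
    refine closure_minimal (fun p hp => ?_)
      (((isClosed_tsupport f).prod (isClosed_tsupport f)).preimage (by fun_prop))
    exact ⟨subset_tsupport _ (left_ne_zero_of_mul hp), subset_tsupport _ (right_ne_zero_of_mul hp)⟩
  have hR : tsupport u ⊆ Rect a := fun p hp => by
    obtain ⟨h1, h2⟩ := hsub hp
    obtain ⟨h1a, h1b⟩ := hs h1
    obtain ⟨h2a, h2b⟩ := hs h2
    simp only at h1a h1b h2a h2b
    refine ⟨⟨pos_of_mul_pos_right h1a (by positivity), ?_⟩,
      pos_of_mul_pos_right h2a ha.le, ?_⟩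
    · rwa [inv_mul_lt_iff₀ ha, mul_one] at h1b
    · rwa [lt_div_iff₀' ha]
  have hcs : HasCompactSupport u :=
    (isCompact_Icc.prod isCompact_Icc).of_isClosed_subset (isClosed_tsupport _)
      (hR.trans (Set.prod_mono Set.Ioo_subset_Icc_self Set.Ioo_subset_Icc_self))
  have hxx : ∀ p, uxx u p = (a⁻¹) ^ 2 * deriv (deriv f) (a⁻¹ * p.1) * f (a * p.2) := by
    rintro ⟨x, y⟩
    rw [uxx_apply hcd, ← deriv_deriv_comp_mul]
    simp only [hu]
    rw [← deriv_mul_const_field]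
    congr 1
    exact funext fun t => deriv_mul_const_field _
  have hyy : ∀ p, uyy u p = f (a⁻¹ * p.1) * (a ^ 2 * deriv (deriv f) (a * p.2)) := by
    rintro ⟨x, y⟩
    rw [uyy_apply hcd, ← deriv_deriv_comp_mul]
    simp only [hu]
    rw [← deriv_const_mul_field]
    congr 1
    exact funext fun t => deriv_const_mul_field _
  have key : ∀ g h : ℝ → ℝ, ∫ p : ℝ × ℝ, g (a⁻¹ * p.1) * h (a * p.2) =
      (∫ x, g x) * ∫ x, h x := fun g h => by
    rw [Measure.volume_eq_prod,
      integral_prod_mul (fun x => g (a⁻¹ * x)) (fun x => h (a * x)),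
      Measure.integral_comp_mul_left, Measure.integral_comp_mul_left, inv_inv, abs_of_pos ha,
      abs_of_pos (inv_pos.2 ha), smul_eq_mul, smul_eq_mul]
    field_simp
  refine ⟨u, ⟨hcd, hcs, hR⟩, ?_, ?_⟩
  · have := key (fun x => f x ^ 2) (fun x => f x ^ 2)
    simp only [hu, mul_pow]
    rw [this, sq]
  · rw [integral_add (integrable_uxx_sq hcd hcs) (integrable_uyy_sq hcd hcs)]
    have k1 := key (fun x => deriv (deriv f) x ^ 2) (fun x => f x ^ 2)
    have k2 := key (fun x => f x ^ 2) (fun x => deriv (deriv f) x ^ 2)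
    have r1 : ∀ p : ℝ × ℝ, uxx u p ^ 2 =
        (a⁻¹) ^ 4 * (deriv (deriv f) (a⁻¹ * p.1) ^ 2 * f (a * p.2) ^ 2) := fun p => by
      rw [hxx]; ring
    have r2 : ∀ p : ℝ × ℝ, uyy u p ^ 2 =
        a ^ 4 * (f (a⁻¹ * p.1) ^ 2 * deriv (deriv f) (a * p.2) ^ 2) := fun p => by
      rw [hyy]; ring
    simp only [r1, r2, integral_const_mul]
    rw [k1, k2, zpow_neg, inv_pow]
    norm_cast
    ring

theorem exists_seq_rayleigh_quotient_tendsto {ω : ℝ} (hω0 : 0 < ω) (hω : cos ω * cosh ω = 1)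
    {a : ℝ} (ha : 0 < a) :
    ∃ r : ℕ → ℝ, (∀ᶠ n in atTop, ∃ u : ℝ × ℝ → ℝ, Adm (Rect a) u ∧ u ≠ 0 ∧
        r n = (∫ p, ((uxx u p) ^ 2 + (uyy u p) ^ 2)) / (∫ p, (u p) ^ 2)) ∧
      Tendsto r atTop (nhds (ω ^ 4 * (a ^ 4 + a ^ (-4 : ℤ)))) := by
  obtain ⟨φ, hφ, h00, h01, h10, h11, hpos, heq⟩ := exists_clamped_beam_eigenfunction hω0 hω
  obtain ⟨t0, t2⟩ := tendsto_integral_truncation_sq hφ h00 h01 h10 h11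
  refine ⟨fun n => (a ^ 4 + a ^ (-4 : ℤ)) * ((∫ x, deriv (deriv (truncation φ (n + 1))) x ^ 2) /
    ∫ x, truncation φ (n + 1) x ^ 2), ?_, ?_⟩
  · filter_upwards [t0.eventually_const_lt hpos] with n hn
    have hN : (0 : ℝ) < n + 1 := by positivity
    obtain ⟨u, hu, hB, hA⟩ := integral_uxx_sq_add_uyy_sq_scaled_product
      (contDiff_truncation hφ (n + 1))
      (tsupport_truncation_subset φ hN) ha
    refine ⟨u, hu, ?_, ?_⟩
    · rintro rfl
      have : 0 < (∫ x, truncation φ (n + 1) x ^ 2) ^ 2 := pow_pos hn 2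
      rw [← hB] at this
      simp at this
    · rw [hA, hB]
      field_simp
  · have h := (t2.div t0 hpos.ne').const_mul (a ^ 4 + a ^ (-4 : ℤ))
    rwa [heq, mul_div_cancel_right₀ _ hpos.ne', mul_comm] at h

/-- For the strongly elliptic operator `∂⁴/∂x⁴ + ∂⁴/∂y⁴` on `R_a` with
clamped boundary conditions: the lower bound
`∫ (u_xx)² + (u_yy)² ≥ ω₁⁴(a⁴ + a⁻⁴) ∫ u²` holds for all admissible `u`,
i.e. its first eigenvalue equals `ω₁⁴(a⁴ + a⁻⁴)`. -/
theorem anisotropic_operator_first_eigenvalue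
    (ω : ℝ) (hω : IsLeast {x : ℝ | 0 < x ∧ Real.cos x * Real.cosh x = 1} ω)
    (a : ℝ) (ha : 1 ≤ a) :
    (∀ u : ℝ × ℝ → ℝ, Adm (Rect a) u →
      (∫ p, ((uxx u p) ^ 2 + (uyy u p) ^ 2)) ≥
        ω ^ 4 * (a ^ 4 + a ^ (-4 : ℤ)) * ∫ p, (u p) ^ 2) ∧
    sInf { μ | ∃ u : ℝ × ℝ → ℝ, Adm (Rect a) u ∧ u ≠ 0 ∧
        μ = (∫ p, ((uxx u p) ^ 2 + (uyy u p) ^ 2)) / (∫ p, (u p) ^ 2) } =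
      ω ^ 4 * (a ^ 4 + a ^ (-4 : ℤ)) := by
  have ha0 : 0 < a := by linarith
  have hlow : ∀ u : ℝ × ℝ → ℝ, Adm (Rect a) u → _ := fun u hu =>
    anisotropic_lower_bound hω ha0 hu
  refine ⟨hlow, ?_⟩
  obtain ⟨r, hr, hlim⟩ := exists_seq_rayleigh_quotient_tendsto hω.1.1 hω.1.2 ha0
  have hlb : ω ^ 4 * (a ^ 4 + a ^ (-4 : ℤ)) ∈ lowerBounds { μ | ∃ u : ℝ × ℝ → ℝ,
      Adm (Rect a) u ∧ u ≠ 0 ∧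
        μ = (∫ p, ((uxx u p) ^ 2 + (uyy u p) ^ 2)) / (∫ p, (u p) ^ 2) } := by
    rintro μ ⟨u, hu, hu0, rfl⟩
    obtain ⟨p, hp⟩ := Function.ne_iff.1 hu0
    have hpos : 0 < ∫ p, u p ^ 2 :=
      (hu.1.continuous.pow 2).integral_pos_of_hasCompactSupport_nonneg_nonzero
        hu.2.1.sq (fun x => sq_nonneg _) (x := p) (pow_ne_zero 2 hp)
    rw [le_div_iff₀ hpos]
    exact hlow u hu
  refine le_antisymm (ge_of_tendsto hlim (hr.mono fun n hn => csInf_le ⟨_, hlb⟩ hn)) ?_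
  obtain ⟨n, hn⟩ := hr.exists
  exact le_csInf ⟨_, hn⟩ hlb
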